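/- Let d ≥ 1 and let s : Fin d → ℕ be any exponent vector, with total degree S = Σ_i s_i. Then the Haar moments of the squared amplitudes of the first column of a Haar-random unitary are the moments of the flat (Lebesgue) measure on the d-point probability simplex: ∫_{U(d)} ∏_{i ∈ Fin d} |U_{i,0}|^{2 s_i} dHaar(U) = ( ∏_{i} (s_i)! ) · (d−1)! / (d−1+S)!. -/

import Mathlib

/-! A vector `z` of independent standard complex Gaussians has a unitarily invariant law, so `f z`
and `f (U z)` have the same mean for every unitary `U`. Averaging over `U` as well, and using that
the unitary group acts transitively on the unit sphere, writes the Gaussian mean of a function `f`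
homogeneous of degree `k` as the mean of `f` over a column of `U` times `E ‖z‖ ^ k`. For
`f z = ∏ i, |z i| ^ (2 * s i)`, of degree `2 * S`, the Gaussian mean is `∏ i, (s i)!`, because
`|z i| ^ 2` is exponentially distributed. By the multinomial theorem `E ‖z‖ ^ (2 * S)` is `S!` times
the number of exponent vectors of total degree `S`, that is `d (d + 1) ⋯ (d + S - 1)`. -/

open MeasureTheory Matrix

noncomputable instance Matrix.measurableSpace {m n R : Type*} [MeasurableSpace R] :
    MeasurableSpace (Matrix m n R) := inferInstanceAs (MeasurableSpace (m → n → R))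

instance Matrix.borelSpace {m n R : Type*} [Countable m] [Countable n]
    [TopologicalSpace R] [MeasurableSpace R] [BorelSpace R] [SecondCountableTopology R] :
    BorelSpace (Matrix m n R) := inferInstanceAs (BorelSpace (m → n → R))

instance {ι : Type*} [Fintype ι] [DecidableEq ι] :
    BorelSpace (Matrix.unitaryGroup ι ℂ) := Subtype.borelSpace _

open scoped Nat Real

lemma isMulRightInvariant_of_isHaarMeasure_of_compactSpace {G : Type*} [Group G]
    [TopologicalSpace G] [IsTopologicalGroup G] [CompactSpace G] [MeasurableSpace G] [BorelSpace G]
    (μ : Measure G) [μ.IsHaarMeasure] : μ.IsMulRightInvariant where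
  map_mul_right_eq_self g := by
    have h_map := Measure.isMulInvariant_eq_smul_of_compactSpace (μ.map (· * g)) μ
    have h_univ := congr($h_map Set.univ)
    rw [Measure.map_apply (by fun_prop) .univ, Set.preimage_univ, Measure.smul_apply,
      ENNReal.smul_def, smul_eq_mul] at h_univ
    have h_one : (Measure.haarScalarFactor (μ.map (· * g)) μ : ENNReal) = 1 :=
      (ENNReal.mul_eq_right (NeZero.ne _) (by simp)).1 h_univ.symm
    rw [h_map, ENNReal.coe_eq_one.1 h_one, one_smul]

lemma measurePreserving_withDensity_comp {α β : Type*} {mα : MeasurableSpace α}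
    {mβ : MeasurableSpace β} {μ : Measure α} {ν : Measure β} {f : α → β} {g : β → ENNReal}
    (hf : MeasurePreserving f μ ν) (hg : Measurable g) :
    MeasurePreserving f (μ.withDensity fun x ↦ g (f x)) (ν.withDensity g) := by
  refine ⟨hf.measurable, Measure.ext fun s hs ↦ ?_⟩
  rw [Measure.map_apply hf.measurable hs, withDensity_apply _ (hf.measurable hs),
    withDensity_apply _ hs, ← hf.setLIntegral_comp_preimage hs hg]

lemma exists_norm_le_mul_norm_pow_of_map_smul {E F : Type*} [NormedAddCommGroup E]
    [NormedSpace ℝ E] [ProperSpace E] [NormedAddCommGroup F] [NormedSpace ℝ F] {f : E → F} {k : ℕ}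
    (hf_cont : Continuous f) (hf : ∀ (r : ℝ) x, f (r • x) = r ^ k • f x) :
    ∃ C, ∀ x, ‖f x‖ ≤ C * ‖x‖ ^ k := by
  obtain ⟨C, hC⟩ := (isCompact_closedBall (0 : E) 1).exists_bound_of_continuousOn
    hf_cont.continuousOn
  refine ⟨C, fun x ↦ ?_⟩
  have h_ball : ‖x‖⁻¹ • x ∈ Metric.closedBall (0 : E) 1 := by
    simpa [norm_smul] using inv_mul_le_one
  calc ‖f x‖ = ‖f (‖x‖ • ‖x‖⁻¹ • x)‖ := by
        obtain rfl | hx := eq_or_ne x 0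
        · simp
        · rw [smul_inv_smul₀ (norm_ne_zero_iff.2 hx)]
    _ = ‖x‖ ^ k * ‖f (‖x‖⁻¹ • x)‖ := by rw [hf, norm_smul, norm_pow, norm_norm]
    _ ≤ C * ‖x‖ ^ k := by rw [mul_comm C]; gcongr; exact hC _ h_ball

section UnitaryGroup

variable {ι 𝕜 : Type*} [Fintype ι] [DecidableEq ι] [RCLike 𝕜]

instance compactSpace_unitaryGroup : CompactSpace (unitaryGroup ι 𝕜) := by
  have h_subset : (unitaryGroup ι 𝕜 : Set (Matrix ι ι 𝕜)) ⊆
      Set.univ.pi fun _ ↦ Set.univ.pi fun _ ↦ Metric.closedBall 0 1 :=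
    fun A hA i _ j _ ↦ by simpa using entry_norm_bound_of_unitary hA i j
  have h_compact : IsCompact (X := Matrix ι ι 𝕜)
      (Set.univ.pi fun _ ↦ Set.univ.pi fun _ ↦ Metric.closedBall 0 1) :=
    isCompact_univ_pi fun _ ↦ isCompact_univ_pi fun _ ↦ isCompact_closedBall _ _
  exact isCompact_iff_compactSpace.1 (h_compact.of_isClosed_subset isClosed_unitary h_subset)

instance secondCountableTopology_unitaryGroup : SecondCountableTopology (unitaryGroup ι 𝕜) :=
  have : SecondCountableTopology (Matrix ι ι 𝕜) :=
    inferInstanceAs (SecondCountableTopology (ι → ι → 𝕜))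
  TopologicalSpace.Subtype.secondCountableTopology _

lemma norm_toLp_unitaryGroup_mulVec (U : unitaryGroup ι 𝕜) (z : ι → 𝕜) :
    ‖WithLp.toLp 2 (U.1 *ᵥ z)‖ = ‖WithLp.toLp 2 z‖ := by
  rw [← sq_eq_sq₀ (norm_nonneg _) (norm_nonneg _), ← RCLike.ofReal_inj (K := 𝕜)]
  push_cast
  rw [← inner_self_eq_norm_sq_to_K, ← inner_self_eq_norm_sq_to_K,
    EuclideanSpace.inner_toLp_toLp, EuclideanSpace.inner_toLp_toLp, dotProduct_comm, star_mulVec,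
    dotProduct_mulVec, vecMul_vecMul, ← star_eq_conjTranspose, mem_unitaryGroup_iff'.1 U.2,
    vecMul_one, dotProduct_comm]

lemma exists_unitaryGroup_col_eq {v : ι → 𝕜} (hv : ‖WithLp.toLp 2 v‖ = 1) (o : ι) :
    ∃ V : unitaryGroup ι 𝕜, V.1.col o = v := by
  have h_orthonormal : Orthonormal 𝕜
      (({o} : Set ι).domRestrict fun _ ↦ (WithLp.toLp 2 v : EuclideanSpace 𝕜 ι)) :=
    ⟨fun _ ↦ hv, fun i j hij ↦ (hij (Subsingleton.elim i j)).elim⟩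
  obtain ⟨b, hb⟩ := h_orthonormal.exists_orthonormalBasis_extension_of_card_eq (by simp)
  refine ⟨⟨_, (EuclideanSpace.basisFun ι 𝕜).toMatrix_orthonormalBasis_mem_unitary b⟩, ?_⟩
  ext i
  simp [Module.Basis.toMatrix_apply, hb o rfl]

lemma exists_unitaryGroup_eq_norm_smul_col (z : ι → 𝕜) (o : ι) :
    ∃ V : unitaryGroup ι 𝕜, z = (‖WithLp.toLp 2 z‖ : 𝕜) • V.1.col o := by
  obtain rfl | hz := eq_or_ne z 0
  · exact ⟨1, by simp⟩
  have h_norm : (‖WithLp.toLp 2 z‖ : 𝕜) ≠ 0 := by simpa using hz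
  obtain ⟨V, hV⟩ := exists_unitaryGroup_col_eq
    (v := (‖WithLp.toLp 2 z‖⁻¹ : 𝕜) • z) (by
      rw [WithLp.toLp_smul, norm_smul]
      simp [hz]) o
  exact ⟨V, by rw [hV, smul_inv_smul₀ h_norm]⟩

lemma measurePreserving_unitaryGroup_mulVec (U : unitaryGroup ι ℂ) :
    MeasurePreserving fun z : ι → ℂ ↦ U.1 *ᵥ z := by
  let f : (ι → ℂ) →ₗ[ℝ] (ι → ℂ) := (toLin' U.1).restrictScalars ℝ
  have h_norm_det : ‖U.1.det‖ = 1 := CStarRing.norm_of_mem_unitary (det_of_mem_unitary U.2)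
  have h_det : LinearMap.det f = 1 := by
    rw [LinearMap.det_restrictScalars, LinearMap.det_toLin', Algebra.norm_complex_apply,
      Complex.normSq_eq_norm_sq, h_norm_det, one_pow]
  have h_map := Measure.map_linearMap_addHaar_eq_smul_addHaar volume (f := f) (by simp [h_det])
  refine ⟨by fun_prop, ?_⟩
  rwa [h_det, inv_one, abs_one, ENNReal.ofReal_one, one_smul] at h_map

variable (μ : Measure (unitaryGroup ι ℂ)) [μ.IsMulRightInvariant]
  {F : Type*} [NormedAddCommGroup F] [NormedSpace ℝ F] {f : (ι → ℂ) → F} {k : ℕ}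

lemma integral_unitaryGroup_mulVec_eq_norm_pow_smul (hf : ∀ (r : ℝ) z, f (r • z) = r ^ k • f z)
    (z : ι → ℂ) (o : ι) :
    ∫ U, f (U.1 *ᵥ z) ∂μ = ‖WithLp.toLp 2 z‖ ^ k • ∫ U, f (U.1.col o) ∂μ := by
  obtain ⟨V, hV⟩ := exists_unitaryGroup_eq_norm_smul_col z o
  have h_orbit (U : unitaryGroup ι ℂ) :
      f (U.1 *ᵥ z) = ‖WithLp.toLp 2 z‖ ^ k • f ((U * V).1.col o) := by
    rw [← hf]
    conv_lhs => rw [hV, ← mulVec_single_one V.1 o, mulVec_smul, mulVec_mulVec, mulVec_single_one]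
    rfl
  simp_rw [h_orbit]
  rw [integral_smul, integral_mul_right_eq_self fun U : unitaryGroup ι ℂ ↦ f (U.1.col o)]

theorem integral_eq_integral_norm_pow_smul_integral_col [CompleteSpace F]
    [IsProbabilityMeasure μ] {ν : Measure (ι → ℂ)} [SFinite ν]
    (hν : ∀ U : unitaryGroup ι ℂ, MeasurePreserving (fun z ↦ U.1 *ᵥ z) ν ν)
    (hf_cont : Continuous f) (hf : ∀ (r : ℝ) z, f (r • z) = r ^ k • f z)
    (h_int : Integrable (fun z ↦ ‖WithLp.toLp 2 z‖ ^ k) ν) (o : ι) :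
    ∫ z, f z ∂ν = (∫ z, ‖WithLp.toLp 2 z‖ ^ k ∂ν) • ∫ U, f (U.1.col o) ∂μ := by
  have h_integrable : Integrable (fun p : unitaryGroup ι ℂ × (ι → ℂ) ↦ f (p.1.1 *ᵥ p.2))
      (μ.prod ν) := by
    obtain ⟨C, hC⟩ := exists_norm_le_mul_norm_pow_of_map_smul
      (f := fun x : EuclideanSpace ℂ ι ↦ f x.ofLp) (by fun_prop) fun r x ↦ hf r x.ofLp
    refine ((h_int.const_mul C).comp_snd μ).mono'
      (by fun_prop : Continuous _).aestronglyMeasurable (.of_forall fun p ↦ ?_)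
    simpa [norm_toLp_unitaryGroup_mulVec] using hC (WithLp.toLp 2 (p.1.1 *ᵥ p.2))
  calc ∫ z, f z ∂ν
      = ∫ U : unitaryGroup ι ℂ, ∫ z, f (U.1 *ᵥ z) ∂ν ∂μ := by
        have h_inv (U : unitaryGroup ι ℂ) : ∫ z, f (U.1 *ᵥ z) ∂ν = ∫ z, f z ∂ν := by
          rw [← integral_map (hν U).aemeasurable hf_cont.aestronglyMeasurable, (hν U).map_eq]
        simp [h_inv]
    _ = ∫ z, ∫ U : unitaryGroup ι ℂ, f (U.1 *ᵥ z) ∂μ ∂ν := integral_integral_swap h_integrable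
    _ = (∫ z, ‖WithLp.toLp 2 z‖ ^ k ∂ν) • ∫ U, f (U.1.col o) ∂μ := by
        simp_rw [integral_unitaryGroup_mulVec_eq_norm_pow_smul μ hf _ o]
        rw [integral_smul_const]

end UnitaryGroup

section Gaussian

variable (ι : Type*) [Fintype ι]

/-- The law of a vector of independent standard complex Gaussians, the unitarily invariant measure
that is compared with the columns of a Haar unitary. It is normalised so that `E |z i| ^ 2 = 1` for
every coordinate. -/
noncomputable def stdComplexGaussian : Measure (ι → ℂ) :=
  volume.withDensity fun z ↦ ENNReal.ofReal (∏ i, π⁻¹ * rexp (-‖z i‖ ^ 2))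

instance sFinite_stdComplexGaussian : SFinite (stdComplexGaussian ι) := by
  unfold stdComplexGaussian
  infer_instance

variable {ι}

lemma measurePreserving_stdComplexGaussian_unitaryGroup_mulVec [DecidableEq ι]
    (U : unitaryGroup ι ℂ) :
    MeasurePreserving (fun z ↦ U.1 *ᵥ z) (stdComplexGaussian ι) (stdComplexGaussian ι) := by
  let g (z : ι → ℂ) : ENNReal := ENNReal.ofReal (∏ i, π⁻¹ * rexp (-‖z i‖ ^ 2))
  have h_density (z : ι → ℂ) : g (U.1 *ᵥ z) = g z := by
    have h_norm := congr($(norm_toLp_unitaryGroup_mulVec U z) ^ 2)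
    simp only [EuclideanSpace.norm_sq_eq] at h_norm
    simp only [g, Finset.prod_mul_distrib, ← Real.exp_sum, Finset.sum_neg_distrib, h_norm]
  have h_mp := measurePreserving_withDensity_comp (g := g)
    (measurePreserving_unitaryGroup_mulVec U) (by fun_prop)
  simpa only [h_density] using! h_mp

lemma integral_complex_gaussian_mul_norm_pow (n : ℕ) :
    ∫ z : ℂ, π⁻¹ * rexp (-‖z‖ ^ 2) * ‖z‖ ^ (2 * n) = n ! := by
  have h := Complex.integral_rpow_mul_exp_neg_rpow (p := 2) (q := 2 * n) (by norm_num)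
    (by linarith [n.cast_nonneg (α := ℝ)])
  rw [show ((2 * n + 2 : ℝ) / 2) = n + 1 by ring, Real.Gamma_nat_eq_factorial] at h
  norm_cast at h
  simp_rw [mul_assoc, mul_comm (rexp _)]
  rw [integral_const_mul, h]
  field_simp

lemma integral_stdComplexGaussian_prod_norm_pow (s : ι → ℕ) :
    ∫ z, ∏ i, ‖z i‖ ^ (2 * s i) ∂stdComplexGaussian ι = ∏ i, ((s i)! : ℝ) := by
  rw [stdComplexGaussian, integral_withDensity_eq_integral_toReal_smul (by fun_prop) (by simp)]
  have h_nonneg (z : ι → ℂ) : 0 ≤ ∏ i, π⁻¹ * rexp (-‖z i‖ ^ 2) :=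
    Finset.prod_nonneg fun _ _ ↦ by positivity
  simp_rw [ENNReal.toReal_ofReal (h_nonneg _), smul_eq_mul, ← Finset.prod_mul_distrib]
  rw [integral_fintype_prod_volume_eq_prod fun i (w : ℂ) ↦ π⁻¹ * rexp (-‖w‖ ^ 2) * ‖w‖ ^ (2 * s i)]
  simp_rw [integral_complex_gaussian_mul_norm_pow]

lemma integrable_stdComplexGaussian_prod_norm_pow (s : ι → ℕ) :
    Integrable (fun z ↦ ∏ i, ‖z i‖ ^ (2 * s i)) (stdComplexGaussian ι) :=
  .of_integral_ne_zero <| by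
    rw [integral_stdComplexGaussian_prod_norm_pow]
    positivity

lemma norm_toLp_pow_eq_sum_piAntidiag [DecidableEq ι] (z : ι → ℂ) (n : ℕ) :
    ‖WithLp.toLp 2 z‖ ^ (2 * n) = ∑ s ∈ Finset.univ.piAntidiag n,
      (Nat.multinomial Finset.univ s : ℝ) * ∏ i, ‖z i‖ ^ (2 * s i) := by
  simp_rw [pow_mul, EuclideanSpace.norm_sq_eq, Finset.sum_pow_eq_sum_piAntidiag]

lemma integrable_stdComplexGaussian_norm_pow (n : ℕ) :
    Integrable (fun z ↦ ‖WithLp.toLp 2 z‖ ^ (2 * n)) (stdComplexGaussian ι) := by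
  classical
  simp_rw [norm_toLp_pow_eq_sum_piAntidiag]
  exact integrable_finsetSum _ fun s _ ↦
    (integrable_stdComplexGaussian_prod_norm_pow s).const_mul _

lemma card_piAntidiag_univ [DecidableEq ι] (n : ℕ) :
    (Finset.univ.piAntidiag n : Finset (ι → ℕ)).card = (Fintype.card ι).multichoose n := by
  rw [← Finset.map_sym_eq_piAntidiag, Finset.card_map, Finset.sym_univ, Finset.card_univ,
    Sym.card_sym_eq_multichoose]

lemma integral_stdComplexGaussian_norm_pow (n : ℕ) :
    ∫ z, ‖WithLp.toLp 2 z‖ ^ (2 * n) ∂stdComplexGaussian ι =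
      (Fintype.card ι).ascFactorial n := by
  classical
  have h_multinomial (s : ι → ℕ) (hs : s ∈ Finset.univ.piAntidiag n) :
      (Nat.multinomial Finset.univ s : ℝ) * ∏ i, ((s i)! : ℝ) = n ! := by
    rw [mul_comm, ← (Finset.mem_piAntidiag.1 hs).1]
    exact_mod_cast Nat.multinomial_spec Finset.univ s
  simp_rw [norm_toLp_pow_eq_sum_piAntidiag]
  rw [integral_finsetSum _ fun s _ ↦
    (integrable_stdComplexGaussian_prod_norm_pow s).const_mul _]
  simp_rw [integral_const_mul, integral_stdComplexGaussian_prod_norm_pow]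
  rw [Finset.sum_congr rfl h_multinomial, Finset.sum_const, card_piAntidiag_univ, nsmul_eq_mul,
    mul_comm, Nat.ascFactorial_eq_factorial_mul_choose', Nat.multichoose_eq, Nat.cast_mul]

end Gaussian

theorem haar_column_moments_eq_simplex_moments_general {ι : Type*} [Fintype ι] [DecidableEq ι]
    (μ : Measure (unitaryGroup ι ℂ)) [μ.IsMulRightInvariant] [IsProbabilityMeasure μ]
    (o : ι) (s : ι → ℕ) :
    ∫ U : unitaryGroup ι ℂ, ∏ i, ‖U i o‖ ^ (2 * s i) ∂μ =
      (∏ i, (s i)! : ℝ) * (Fintype.card ι - 1)! / (Fintype.card ι - 1 + ∑ i, s i)! := by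
  have : Nonempty ι := ⟨o⟩
  have h_hom (r : ℝ) (z : ι → ℂ) : ∏ i, ‖(r • z) i‖ ^ (2 * s i) =
      r ^ (2 * ∑ i, s i) * ∏ i, ‖z i‖ ^ (2 * s i) := by
    simp [mul_pow, Finset.prod_mul_distrib, pow_mul, Finset.prod_pow_eq_pow_sum]
  have h_cont : Continuous fun z : ι → ℂ ↦ ∏ i, ‖z i‖ ^ (2 * s i) := by fun_prop
  have h_avg := integral_eq_integral_norm_pow_smul_integral_col μ
    measurePreserving_stdComplexGaussian_unitaryGroup_mulVec h_cont h_hom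
    (integrable_stdComplexGaussian_norm_pow _) o
  rw [integral_stdComplexGaussian_prod_norm_pow, integral_stdComplexGaussian_norm_pow,
    smul_eq_mul] at h_avg
  have h_fact : ((Fintype.card ι - 1)! : ℝ) * (Fintype.card ι).ascFactorial (∑ i, s i) =
      (Fintype.card ι - 1 + ∑ i, s i)! := by
    have h := Nat.factorial_mul_ascFactorial (Fintype.card ι - 1) (∑ i, s i)
    rw [Nat.sub_add_cancel (Fintype.card_pos (α := ι))] at h
    exact_mod_cast h
  rw [eq_div_iff (by positivity), h_avg, ← h_fact]
  simp only [col_apply]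
  ring

/-- The Haar moments of the squared amplitudes of the first column of a
Haar-random unitary are the moments of the flat (Dirichlet(1,…,1)) measure on the
`d`-point probability simplex. -/
theorem haar_column_moments_eq_simplex_moments (d : ℕ) (hd : 1 ≤ d)
    (μ : Measure (Matrix.unitaryGroup (Fin d) ℂ)) [μ.IsHaarMeasure] [IsProbabilityMeasure μ]
    (s : Fin d → ℕ) :
    ∫ U : Matrix.unitaryGroup (Fin d) ℂ, ∏ i, ‖U i (⟨0, hd⟩ : Fin d)‖ ^ (2 * s i) ∂μ =
      (∏ i, Nat.factorial (s i) : ℝ) * Nat.factorial (d - 1) /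
        Nat.factorial (d - 1 + ∑ i, s i) := by
  have := isMulRightInvariant_of_isHaarMeasure_of_compactSpace μ
  simpa using haar_column_moments_eq_simplex_moments_general μ ⟨0, hd⟩ s
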